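/- For every set S of n points in the plane in convex position and any two trees T, T' ∈ 𝒯(S), the tree T can be transformed into T' by a sequence of at most 4 simultaneous empty-triangle rotations. -/

import Mathlib

open scoped Classical

noncomputable section

/-- Points in the plane. -/
abbrev Pt : Type := ℝ × ℝ

/-- The closed straight-line segment spanned by an (unordered) edge. -/
def segOf (e : Sym2 Pt) : Set Pt :=
  Sym2.lift ⟨fun p q => segment ℝ p q, fun p q => segment_symm ℝ p q⟩ e

/-- The set of endpoints of an edge. -/
def epts (e : Sym2 Pt) : Set Pt := {p | p ∈ e}

/-- Two edges intersect in at most common endpoints (they do not cross). -/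
def NoCrossPair (e f : Sym2 Pt) : Prop := segOf e ∩ segOf f ⊆ epts e ∩ epts f

/-- A set of edges is noncrossing: any two distinct edges meet in at most a common endpoint. -/
def NoCross (E : Finset (Sym2 Pt)) : Prop := ∀ e ∈ E, ∀ f ∈ E, e ≠ f → NoCrossPair e f

/-- `E` is the edge set of a noncrossing straight-line spanning tree on the point set `S`:
all edges are nondegenerate with endpoints in `S`, pairwise noncrossing, there are
`|S| - 1` of them, and they connect all of `S`. -/
def IsPST (S : Finset Pt) (E : Finset (Sym2 Pt)) : Prop :=
  (∀ e ∈ E, ¬ e.IsDiag ∧ ∀ p ∈ e, p ∈ S) ∧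
  NoCross E ∧ E.card + 1 = S.card ∧
  ∀ p ∈ S, ∀ q ∈ S, Relation.ReflTransGen (fun a b => s(a, b) ∈ E) p q

/-- `S` is in general position: no three of its points are collinear. -/
def GenPos (S : Finset Pt) : Prop :=
  ∀ p ∈ S, ∀ q ∈ S, ∀ r ∈ S, p ≠ q → p ≠ r → q ≠ r → ¬ Collinear ℝ ({p, q, r} : Set Pt)

/-- `S` is in convex position: every point of `S` is a vertex of the convex hull of `S`. -/
def ConvexPos (S : Finset Pt) : Prop :=
  ∀ p ∈ S, p ∉ convexHull ℝ ((S : Set Pt) \ {p})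

/-- The open interior of the triangle with vertices `p`, `q`, `r`. -/
def triInt (p q r : Pt) : Set Pt := interior (convexHull ℝ ({p, q, r} : Set Pt))

/-- `y` can be reached from `x` by a sequence of at most `m` `step`-operations. -/
def ReachesIn {α : Type*} (step : α → α → Prop) (m : ℕ) (x y : α) : Prop :=
  ∃ k ≤ m, ∃ f : ℕ → α, f 0 = x ∧ f k = y ∧ ∀ i < k, step (f i) (f (i + 1))

/-- A simultaneous rotation from `E₁` to `E₂`: a bijection `π` between the removed and the
inserted edges such that each `e` shares an endpoint with `π e` and `π e` crosses no edge
of `E₁`. -/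
def SimRotation (S : Finset Pt) (E₁ E₂ : Finset (Sym2 Pt)) : Prop :=
  IsPST S E₁ ∧ IsPST S E₂ ∧ ∃ π : Sym2 Pt → Sym2 Pt,
    Set.BijOn π ↑(E₁ \ E₂) ↑(E₂ \ E₁) ∧
    ∀ e ∈ E₁ \ E₂, (∃ p, p ∈ e ∧ p ∈ π e) ∧ ∀ f ∈ E₁, NoCrossPair (π e) f

/-- An empty-triangle rotation replaces an edge `pq` by an adjacent edge `pr` such that
no edge of either tree meets the interior of the triangle `pqr`. -/
def EmptyTriRot (S : Finset Pt) (E₁ E₂ : Finset (Sym2 Pt)) : Prop :=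
  IsPST S E₁ ∧ IsPST S E₂ ∧ ∃ p q r : Pt,
    E₁ \ E₂ = {s(p, q)} ∧ E₂ \ E₁ = {s(p, r)} ∧
    ∀ g ∈ E₁ ∪ E₂, Disjoint (segOf g) (triInt p q r)

/-- A simultaneous empty-triangle rotation. -/
def SimEmptyTriRot (S : Finset Pt) (E₁ E₂ : Finset (Sym2 Pt)) : Prop :=
  IsPST S E₁ ∧ IsPST S E₂ ∧ ∃ π : Sym2 Pt → Sym2 Pt,
    Set.BijOn π ↑(E₁ \ E₂) ↑(E₂ \ E₁) ∧
    ∀ e ∈ E₁ \ E₂, ∃ p q r : Pt, e = s(p, q) ∧ π e = s(p, r) ∧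
      ∀ g ∈ E₁ ∪ E₂, Disjoint (segOf g) (triInt p q r)

/-- An edge slide replaces `pq` by `pr`, where `qr` is an edge of both trees and no edge of
either tree meets the interior of the triangle `pqr`. -/
def EdgeSlide (S : Finset Pt) (E₁ E₂ : Finset (Sym2 Pt)) : Prop :=
  IsPST S E₁ ∧ IsPST S E₂ ∧ ∃ p q r : Pt,
    E₁ \ E₂ = {s(p, q)} ∧ E₂ \ E₁ = {s(p, r)} ∧
    s(q, r) ∈ E₁ ∧ s(q, r) ∈ E₂ ∧
    ∀ g ∈ E₁ ∪ E₂, Disjoint (segOf g) (triInt p q r)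

/-- A simultaneous edge slide. -/
def SimEdgeSlide (S : Finset Pt) (E₁ E₂ : Finset (Sym2 Pt)) : Prop :=
  IsPST S E₁ ∧ IsPST S E₂ ∧ ∃ π : Sym2 Pt → Sym2 Pt,
    Set.BijOn π ↑(E₁ \ E₂) ↑(E₂ \ E₁) ∧
    ∀ e ∈ E₁ \ E₂, ∃ p q r : Pt, e = s(p, q) ∧ π e = s(p, r) ∧
      s(q, r) ∈ E₁ ∧ s(q, r) ∈ E₂ ∧
      ∀ g ∈ E₁ ∪ E₂, Disjoint (segOf g) (triInt p q r)

/-- `e` is an edge of the convex hull of `S`: it joins two distinct points of `S` and its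
segment lies on the boundary of the convex hull of `S`. -/
def IsHullEdge (S : Finset Pt) (e : Sym2 Pt) : Prop :=
  ∃ u v : Pt, e = s(u, v) ∧ u ∈ S ∧ v ∈ S ∧ u ≠ v ∧
    segment ℝ u v ⊆ frontier (convexHull ℝ (S : Set Pt))

/-- The spanning star centered at `v`. -/
def starAt (S : Finset Pt) (v : Pt) : Finset (Sym2 Pt) := (S.erase v).image (fun w => s(v, w))

/-- An edge-labeled tree: an edge set together with a labeling function. -/
abbrev LTree := Finset (Sym2 Pt) × (Sym2 Pt → ℕ)

/-- `T` is an edge-labeled noncrossing straight-line spanning tree on `S`: its edge set is in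
`𝒯(S)` and its labeling is a bijection from the edges onto `{1, …, |S| - 1}`
(normalized to `0` on non-edges). -/
def IsLabeledPST (S : Finset Pt) (T : LTree) : Prop :=
  IsPST S T.1 ∧ Set.BijOn T.2 ↑T.1 (Set.Icc 1 (S.card - 1)) ∧ ∀ e, e ∉ T.1 → T.2 e = 0

/-- A simultaneous exchange on edge-labeled trees: an arbitrary bijection between removed and
inserted edges transferring labels, all common edges keeping their labels. -/
def LabSimExchange (S : Finset Pt) (T₁ T₂ : LTree) : Prop :=
  IsLabeledPST S T₁ ∧ IsLabeledPST S T₂ ∧ ∃ π : Sym2 Pt → Sym2 Pt,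
    Set.BijOn π ↑(T₁.1 \ T₂.1) ↑(T₂.1 \ T₁.1) ∧
    (∀ e ∈ T₁.1 \ T₂.1, T₂.2 (π e) = T₁.2 e) ∧
    ∀ e ∈ T₁.1 ∩ T₂.1, T₂.2 e = T₁.2 e

/-- A rotation on edge-labeled trees: the removed and inserted edges share an endpoint and do
not cross, the label of the removed edge is transferred, and all other labels are kept. -/
def LabRotation (S : Finset Pt) (T₁ T₂ : LTree) : Prop :=
  IsLabeledPST S T₁ ∧ IsLabeledPST S T₂ ∧ ∃ e₁ e₂ : Sym2 Pt,
    T₁.1 \ T₂.1 = {e₁} ∧ T₂.1 \ T₁.1 = {e₂} ∧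
    (∃ p, p ∈ e₁ ∧ p ∈ e₂) ∧ NoCrossPair e₁ e₂ ∧
    T₂.2 e₂ = T₁.2 e₁ ∧ ∀ e ∈ T₁.1 ∩ T₂.1, T₂.2 e = T₁.2 e

/-- An edge slide on edge-labeled trees, transferring the label of the slid edge. -/
def LabEdgeSlide (S : Finset Pt) (T₁ T₂ : LTree) : Prop :=
  IsLabeledPST S T₁ ∧ IsLabeledPST S T₂ ∧ ∃ p q r : Pt,
    T₁.1 \ T₂.1 = {s(p, q)} ∧ T₂.1 \ T₁.1 = {s(p, r)} ∧
    s(q, r) ∈ T₁.1 ∧ s(q, r) ∈ T₂.1 ∧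
    (∀ g ∈ T₁.1 ∪ T₂.1, Disjoint (segOf g) (triInt p q r)) ∧
    T₂.2 (s(p, r)) = T₁.2 (s(p, q)) ∧ ∀ e ∈ T₁.1 ∩ T₂.1, T₂.2 e = T₁.2 e

/-- signed area -/
def ori (p q r : Pt) : ℝ := (q.1 - p.1) * (r.2 - p.2) - (q.2 - p.2) * (r.1 - p.1)

/-- points in counterclockwise order -/
def CCW (m : ℕ) (f : ℕ → Pt) : Prop :=
  (∀ i j, i ≤ m → j ≤ m → f i = f j → i = j) ∧
  ∀ i j k, i < j → j < k → k ≤ m → 0 < ori (f i) (f j) (f k)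

/-- noninterleaving arcs -/
def NI (x y c d : ℕ) : Prop := ¬ (x < c ∧ c < y ∧ y < d) ∧ ¬ (c < x ∧ x < d ∧ d < y)

theorem segOf_mk (p q : Pt) : segOf s(p, q) = segment ℝ p q := rfl

theorem ori_comb (p q r t : Pt) (α β : ℝ) (h : α + β = 1) :
    ori p q (α • r + β • t) = α * ori p q r + β * ori p q t := by
  have hα : α = 1 - β := by linarith
  subst hα
  simp only [ori, Prod.fst_add, Prod.snd_add, Prod.smul_fst, Prod.smul_snd, smul_eq_mul]
  ring

theorem ori_cyc (p q r : Pt) : ori p q r = ori q r p := by simp only [ori]; ring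
theorem ori_swap (p q r : Pt) : ori p q r = - ori p r q := by simp only [ori]; ring
theorem ori_l (p q : Pt) : ori p q p = 0 := by simp only [ori]; ring
theorem ori_r (p q : Pt) : ori p q q = 0 := by simp only [ori]; ring

theorem tri_pos {p q r z : Pt} (h : 0 < ori p q r) (hz : z ∈ triInt p q r) : 0 < ori p q z := by
  have hsub : convexHull ℝ ({p, q, r} : Set Pt) ⊆ {w | 0 ≤ ori p q w} := by
    apply convexHull_min
    · intro w hw
      simp only [Set.mem_insert_iff, Set.mem_singleton_iff] at hw
      rcases hw with rfl | rfl | rfl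
      · simp [ori_l]
      · simp [ori_r]
      · exact h.le
    · intro a ha b hb s t hs ht hst
      simp only [Set.mem_ofPred_eq] at *
      rw [ori_comb _ _ _ _ _ _ hst]
      positivity
  have hz0 : 0 ≤ ori p q z := hsub (interior_subset hz)
  rcases hz0.lt_or_eq with h1 | h1
  · exact h1
  exfalso
  have hc : Continuous (fun t : ℝ => (1 + t) • z + (-t) • r) := by fun_prop
  have hopen : IsOpen ((fun t : ℝ => (1 + t) • z + (-t) • r) ⁻¹' (triInt p q r)) :=
    isOpen_interior.preimage hc
  have h0 : (0:ℝ) ∈ ((fun t : ℝ => (1 + t) • z + (-t) • r) ⁻¹' (triInt p q r)) := by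
    simpa using hz
  obtain ⟨ε, hε, hb⟩ := Metric.isOpen_iff.1 hopen 0 h0
  have h2 : (ε / 2) ∈ Metric.ball (0:ℝ) ε := by
    rw [Metric.mem_ball, Real.dist_eq, sub_zero, abs_of_pos (by linarith)]; linarith
  have h3 := hsub (interior_subset (hb h2))
  simp only [Set.mem_ofPred_eq] at h3
  rw [ori_comb _ _ _ _ _ _ (by ring), ← h1] at h3
  nlinarith

theorem seg_neg {p q r x y : Pt} (h : 0 < ori p q r) (hx : ori p q x ≤ 0) (hy : ori p q y ≤ 0) :
    Disjoint (segOf s(x, y)) (triInt p q r) := by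
  rw [Set.disjoint_left]
  rintro z ⟨α, β, hα, hβ, hab, rfl⟩ hz
  have := tri_pos h hz
  rw [ori_comb _ _ _ _ _ _ hab] at this
  nlinarith

theorem triInt_cyc (p q r : Pt) : triInt p q r = triInt q r p := by
  unfold triInt
  congr 2
  ext z; simp only [Set.mem_insert_iff, Set.mem_singleton_iff]; tauto

theorem triInt_swap (p q r : Pt) : triInt p q r = triInt p r q := by
  unfold triInt
  congr 2
  ext z; simp only [Set.mem_insert_iff, Set.mem_singleton_iff]; tauto

theorem ccw_in {m : ℕ} {f : ℕ → Pt} (hf : CCW m f) {i j x : ℕ} (hj : j ≤ m)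
    (hix : i ≤ x) (hxj : x ≤ j) : ori (f i) (f j) (f x) ≤ 0 := by
  rcases hix.eq_or_lt with rfl | h1
  · rw [ori_l]
  rcases hxj.eq_or_lt with rfl | h2
  · rw [ori_r]
  rw [ori_swap]
  linarith [hf.2 i x j h1 h2 hj]

theorem ccw_out {m : ℕ} {f : ℕ → Pt} (hf : CCW m f) {i j x : ℕ} (hj : j ≤ m) (hx : x ≤ m)
    (hij : i < j) (h : x ≤ i ∨ j ≤ x) : 0 ≤ ori (f i) (f j) (f x) := by
  rcases h with h | h
  · rcases h.eq_or_lt with rfl | h1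
    · rw [ori_l]
    rw [← ori_cyc]
    exact (hf.2 x i j h1 hij hj).le
  · rcases h.eq_or_lt with rfl | h1
    · rw [ori_r]
    exact (hf.2 i j x hij h1 hx).le

theorem tri_empty {m : ℕ} {f : ℕ → Pt} (hf : CCW m f) {i j k x y : ℕ} (hij : i < j) (hjk : j < k)
    (hk : k ≤ m) (hxy : x < y) (hy : y ≤ m) (h1 : NI x y i j) (h2 : NI x y j k) (h3 : NI x y i k) :
    Disjoint (segOf s(f x, f y)) (triInt (f i) (f j) (f k)) := by
  have hp := hf.2 i j k hij hjk hk
  unfold NI at h1 h2 h3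
  have hc : (i ≤ x ∧ y ≤ j) ∨ (j ≤ x ∧ y ≤ k) ∨
      ((x ≤ i ∨ k ≤ x) ∧ (y ≤ i ∨ k ≤ y)) := by omega
  rcases hc with hc | hc | hc
  · exact seg_neg hp (ccw_in hf (by omega) (by omega) (by omega))
      (ccw_in hf (by omega) (by omega) (by omega))
  · rw [triInt_cyc]
    rw [ori_cyc] at hp
    exact seg_neg hp (ccw_in hf (by omega) (by omega) (by omega))
      (ccw_in hf (by omega) (by omega) (by omega))
  · rw [triInt_cyc, triInt_cyc]
    rw [ori_cyc, ori_cyc] at hp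
    refine seg_neg hp ?_ ?_
    · rw [← ori_cyc, ori_swap, ← ori_cyc]
      have := ccw_out hf hk (by omega : x ≤ m) (by omega : i < k) hc.1
      rw [ori_cyc, ori_swap] at this
      have h5 := ori_cyc (f x) (f k) (f i)
      have h6 := ori_swap (f k) (f i) (f x)
      have h7 := ori_cyc (f i) (f x) (f k)
      have h8 := ori_cyc (f i) (f k) (f x)
      have h9 := ori_swap (f k) (f x) (f i)
      have h10 := ori_swap (f x) (f i) (f k)
      linarith
    · have := ccw_out hf hk hy (by omega : i < k) hc.2
      have h5 := ori_cyc (f y) (f k) (f i)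
      have h8 := ori_cyc (f i) (f k) (f y)
      have h9 := ori_swap (f k) (f i) (f y)
      linarith

theorem edge_inj {m : ℕ} {f : ℕ → Pt} (hf : CCW m f) {i j k l : ℕ} (hij : i < j) (hkl : k < l)
    (hj : j ≤ m) (hl : l ≤ m) (h : s(f i, f j) = s(f k, f l)) : i = k ∧ j = l := by
  rw [Sym2.eq_iff] at h
  rcases h with ⟨h1, h2⟩ | ⟨h1, h2⟩
  · exact ⟨hf.1 _ _ (by omega) (by omega) h1, hf.1 _ _ (by omega) (by omega) h2⟩
  · have := hf.1 _ _ (by omega) (by omega) h1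
    have := hf.1 _ _ (by omega) (by omega) h2
    omega

theorem nocross_aux {p q r t : Pt} (σ : ℝ) (hr : 0 ≤ σ * ori p q r) (ht : 0 ≤ σ * ori p q t)
    (hr0 : σ * ori p q r = 0 → r = p ∨ r = q) (ht0 : σ * ori p q t = 0 → t = p ∨ t = q)
    (hne : r ≠ t) (hd : s(p, q) ≠ s(r, t)) :
    NoCrossPair s(p, q) s(r, t) := by
  rintro z ⟨⟨a, b, ha, hb, hab, rfl⟩, ⟨c, d, hc, hd', hcd, he⟩⟩
  have h0 : ori p q (a • p + b • q) = 0 := by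
    rw [ori_comb _ _ _ _ _ _ hab, ori_l, ori_r]; ring
  rw [← he, ori_comb _ _ _ _ _ _ hcd] at h0
  rw [← he]
  have h1 : c * (σ * ori p q r) + d * (σ * ori p q t) = 0 := by linear_combination σ * h0
  have h2 := mul_nonneg hc hr
  have h3 := mul_nonneg hd' ht
  have h4 : c * (σ * ori p q r) = 0 := by linarith
  have h5 : d * (σ * ori p q t) = 0 := by linarith
  rcases mul_eq_zero.1 h4 with h6 | h6
  · have : d = 1 := by linarith
    subst this; subst h6
    have := ht0 (by linarith)
    simp only [epts, Set.mem_inter_iff, Set.mem_ofPred_eq, Sym2.mem_iff, zero_smul, one_smul, zero_add]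
    tauto
  · rcases mul_eq_zero.1 h5 with h7 | h7
    · have : c = 1 := by linarith
      subst this; subst h7
      have := hr0 (by linarith)
      simp only [epts, Set.mem_inter_iff, Set.mem_ofPred_eq, Sym2.mem_iff, zero_smul, one_smul, add_zero]
      tauto
    · exfalso
      rcases hr0 h6 with rfl | rfl <;> rcases ht0 h7 with rfl | rfl
      · exact hne rfl
      · exact hd rfl
      · exact hd Sym2.eq_swap
      · exact hne rfl

theorem ccw_ne {m : ℕ} {f : ℕ → Pt} (hf : CCW m f) {i j x : ℕ} (hj : j ≤ m) (hx : x ≤ m)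
    (hij : i < j) (h : ori (f i) (f j) (f x) = 0) : f x = f i ∨ f x = f j := by
  rcases lt_trichotomy x i with h1 | rfl | h1
  · have := hf.2 x i j h1 hij hj
    rw [ori_cyc] at this; linarith
  · left; rfl
  rcases lt_trichotomy x j with h2 | rfl | h2
  · have := hf.2 i x j h1 h2 hj
    rw [ori_swap] at this; linarith
  · right; rfl
  · have := hf.2 i j x hij h2 hx
    linarith

theorem nocross_of_NI {m : ℕ} {f : ℕ → Pt} (hf : CCW m f) {i j x y : ℕ} (hij : i < j)
    (hj : j ≤ m) (hxy : x < y) (hy : y ≤ m) (h : NI i j x y) (hne : ¬ (i = x ∧ j = y)) :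
    NoCrossPair s(f i, f j) s(f x, f y) := by
  have hd : s(f i, f j) ≠ s(f x, f y) := fun h => hne (edge_inj hf hij hxy hj hy h)
  have hne' : f x ≠ f y := fun h => by have := hf.1 _ _ (by omega) hy h; omega
  have hx : x ≤ m := by omega
  unfold NI at h
  have hc : (i ≤ x ∧ y ≤ j) ∨ ((x ≤ i ∨ j ≤ x) ∧ (y ≤ i ∨ j ≤ y)) := by omega
  rcases hc with hc | hc
  · apply nocross_aux (-1) _ _ _ _ hne' hd
    · linarith [ccw_in hf hj hc.1 (by omega)]
    · linarith [ccw_in hf hj (by omega : i ≤ y) hc.2]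
    · intro h0; exact ccw_ne hf hj hx hij (by linarith)
    · intro h0; exact ccw_ne hf hj hy hij (by linarith)
  · apply nocross_aux 1 _ _ _ _ hne' hd
    · linarith [ccw_out hf hj hx hij hc.1]
    · linarith [ccw_out hf hj hy hij hc.2]
    · intro h0; exact ccw_ne hf hj hx hij (by linarith)
    · intro h0; exact ccw_ne hf hj hy hij (by linarith)

theorem cross_of_interleave {m : ℕ} {f : ℕ → Pt} (hf : CCW m f) {a b c d : ℕ} (h1 : a < c)
    (h2 : c < b) (h3 : b < d) (hd : d ≤ m) : ¬ NoCrossPair s(f a, f b) s(f c, f d) := by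
  intro h
  have g1 := hf.2 a c b h1 h2 (by omega)
  have g2 := hf.2 a b d (by omega) h3 hd
  have g3 := hf.2 a c d h1 (by omega) hd
  have g4 := hf.2 c b d h2 h3 hd
  have hs : 0 < ori (f a) (f c) (f b) + ori (f a) (f b) (f d) := by linarith
  have hs' : ori (f a) (f c) (f b) + ori (f a) (f b) (f d)
     = ori (f a) (f c) (f d) + ori (f c) (f b) (f d) := by simp only [ori]; ring
  set D := ori (f a) (f c) (f b) + ori (f a) (f b) (f d) with hD
  have hz : (ori (f a) (f b) (f d) / D) • f c + (ori (f a) (f c) (f b) / D) • f d =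
     (ori (f c) (f b) (f d) / D) • f a + (ori (f a) (f c) (f d) / D) • f b := by
    have key : ori (f a) (f b) (f d) • f c + ori (f a) (f c) (f b) • f d =
     ori (f c) (f b) (f d) • f a + ori (f a) (f c) (f d) • f b := by
      ext
      · simp only [ori, Prod.fst_add, Prod.smul_fst, smul_eq_mul]; ring
      · simp only [ori, Prod.snd_add, Prod.smul_snd, smul_eq_mul]; ring
    have := congrArg (fun v => D⁻¹ • v) key
    simp only [smul_add, smul_smul] at this
    simpa only [div_eq_inv_mul] using this
  have hm := @h ((ori (f a) (f b) (f d) / D) • f c + (ori (f a) (f c) (f b) / D) • f d) ⟨?_, ?_⟩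
  · simp only [epts, Set.mem_inter_iff, Set.mem_ofPred_eq, Sym2.mem_iff] at hm
    obtain ⟨u1, u2⟩ := hm
    have : (f a = f c ∨ f a = f d) ∨ (f b = f c ∨ f b = f d) := by
      rcases u1 with u1 | u1 <;> rw [u1] at u2 <;> tauto
    rcases this with (e | e) | (e | e) <;>
    · have := hf.1 _ _ (by omega) (by omega) e
      omega
  · rw [hz]
    exact ⟨_, _, by positivity, by positivity, by rw [← add_div, hs', add_comm, div_self (by linarith)], rfl⟩
  · exact ⟨_, _, by positivity, by positivity, by rw [← add_div, add_comm, div_self (by linarith)], rfl⟩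

theorem comb (m : ℕ) (A : ℕ → ℕ → Prop) (hlt : ∀ a b, A a b → a < b ∧ b ≤ m)
    (hnc : ∀ a b c d, A a b → A c d → ¬ (a < c ∧ c < b ∧ b < d))
    (hconn : ∀ P : ℕ → Prop, (∀ a b, A a b → (P a ↔ P b)) → ∀ i j, i ≤ m → j ≤ m → P i → P j) :
    ∃ a b : ℕ → ℕ, (∀ u < m, A (a u) (b u) ∧ a u ≤ u ∧ u < b u ∧
      ∀ c d, A c d → c ≤ u → u < d → c ≤ a u ∧ b u ≤ d) ∧
      ∀ u w, u < m → w < m → a u = a w → b u = b w → u = w := by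
  have hex : ∀ u, ∃ ab : ℕ × ℕ, u < m → A ab.1 ab.2 ∧ ab.1 ≤ u ∧ u < ab.2 ∧
      ∀ c d, A c d → c ≤ u → u < d → c ≤ ab.1 ∧ ab.2 ≤ d := by
    intro u
    by_cases hu : u < m
    swap
    · exact ⟨(0, 0), fun h => absurd h hu⟩
    have hcov : ∃ l, ∃ a b, A a b ∧ a ≤ u ∧ u < b ∧ b - a = l := by
      by_contra hno
      push Not at hno
      have := hconn (fun i => i ≤ u) (by
        intro a b hab
        have h1 := hlt a b hab
        have h2 := hno (b - a) a b hab
        constructor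
        · intro h; by_contra h'; exact h2 h (by omega) rfl
        · intro h; omega) u (u + 1) (by omega) (by omega) le_rfl
      simp at this
    obtain ⟨a, b, hab, h1, h2, h3⟩ := Nat.find_spec hcov
    refine ⟨(a, b), fun _ => ⟨hab, h1, h2, ?_⟩⟩
    intro c d hcd h4 h5
    have h6 : b - a ≤ d - c := by
      rw [h3]; exact Nat.find_min' hcov ⟨c, d, hcd, h4, h5, rfl⟩
    have := hnc _ _ _ _ hab hcd
    have := hnc _ _ _ _ hcd hab
    simp only
    omega
  choose ab hab using hex
  have key : ∀ u w, u < w → w < m → (ab u).1 = (ab w).1 → (ab u).2 = (ab w).2 → False := by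
    intro u w huw hw e1 e2
    obtain ⟨p1, p2, p3, p4⟩ := hab u (by omega)
    obtain ⟨q1, q2, q3, q4⟩ := hab w hw
    have := hconn (fun i => u < i ∧ i ≤ w) (by
      intro c d hcd
      have h1 := hlt c d hcd
      have h2 := p4 c d hcd
      have h3 := q4 c d hcd
      constructor
      · intro h
        refine ⟨by omega, ?_⟩
        by_contra h'
        have := h3 (by omega) (by omega)
        omega
      · intro h
        refine ⟨?_, by omega⟩
        by_contra h'
        have := h2 (by omega) (by omega)
        omega) (u + 1) u (by omega) (by omega) (by omega)
    simp at this
  refine ⟨fun u => (ab u).1, fun u => (ab u).2, hab, ?_⟩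
  intro u w hu hw e1 e2
  rcases lt_trichotomy u w with h | h | h
  · exact (key u w h hw e1 e2).elim
  · exact h
  · exact (key w u h hu e1.symm e2.symm).elim

theorem rtg_symm {α : Type*} {r : α → α → Prop} (hr : ∀ a b, r a b → r b a) (a b : α)
    (h : Relation.ReflTransGen r a b) : Relation.ReflTransGen r b a := by
  induction h with
  | refl => exact Relation.ReflTransGen.refl
  | tail _ hbc ih => exact Relation.ReflTransGen.head (hr _ _ hbc) ih

theorem pst_of_parent {m : ℕ} {f : ℕ → Pt} (hf : CCW m f) (b : ℕ → ℕ)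
    (hb : ∀ u < m, u < b u ∧ b u ≤ m)
    (hn : ∀ u w, u < m → w < m → NI u (b u) w (b w)) :
    IsPST ((Finset.range (m + 1)).image f)
      ((Finset.range m).image (fun u => s(f u, f (b u)))) := by
  refine ⟨?_, ?_, ?_, ?_⟩
  · intro e he
    obtain ⟨u, hu, rfl⟩ := Finset.mem_image.1 he
    rw [Finset.mem_range] at hu
    have := hb u hu
    constructor
    · rw [Sym2.mk_isDiag_iff]
      intro h
      have := hf.1 _ _ (by omega) (by omega) h
      omega
    · intro p hp
      rw [Sym2.mem_iff] at hp
      rcases hp with rfl | rfl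
      · exact Finset.mem_image_of_mem _ (Finset.mem_range.2 (by omega))
      · exact Finset.mem_image_of_mem _ (Finset.mem_range.2 (by omega))
  · intro e he g hg hne
    obtain ⟨u, hu, rfl⟩ := Finset.mem_image.1 he
    obtain ⟨w, hw, rfl⟩ := Finset.mem_image.1 hg
    rw [Finset.mem_range] at hu hw
    have h1 := hb u hu
    have h2 := hb w hw
    refine nocross_of_NI hf h1.1 h1.2 h2.1 h2.2 (hn u w hu hw) ?_
    rintro ⟨rfl, _⟩
    exact hne rfl
  · rw [Finset.card_image_of_injOn, Finset.card_image_of_injOn, Finset.card_range, Finset.card_range]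
    · intro i hi j hj h
      simp only [Finset.coe_range, Set.mem_Iio] at hi hj
      exact hf.1 _ _ (by omega) (by omega) h
    · intro u hu w hw h
      simp only [Finset.coe_range, Set.mem_Iio] at hu hw
      have h1 := hb u hu
      have h2 := hb w hw
      exact (edge_inj hf h1.1 h2.1 h1.2 h2.2 h).1
  · have hr : ∀ k i, i + k = m → Relation.ReflTransGen
        (fun a c => s(a, c) ∈ (Finset.range m).image (fun u => s(f u, f (b u)))) (f i) (f m) := by
      intro k
      induction k using Nat.strong_induction_on with
      | _ k ih =>
        intro i hi
        rcases Nat.eq_zero_or_pos k with rfl | hk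
        · obtain rfl : i = m := by omega
          exact Relation.ReflTransGen.refl
        · have h1 := hb i (by omega)
          refine Relation.ReflTransGen.head ?_ (ih (m - b i) (by omega) (b i) (by omega))
          exact Finset.mem_image.2 ⟨i, Finset.mem_range.2 (by omega), rfl⟩
    intro p hp q hq
    obtain ⟨i, hi, rfl⟩ := Finset.mem_image.1 hp
    obtain ⟨j, hj, rfl⟩ := Finset.mem_image.1 hq
    rw [Finset.mem_range] at hi hj
    exact (hr (m - i) i (by omega)).trans
      (rtg_symm (fun a c h => by rw [Sym2.eq_swap]; exact h) _ _
        (hr (m - j) j (by omega)))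

theorem step_gen {S : Finset Pt} {m : ℕ} (p q r : ℕ → Pt) {E₁ E₂ : Finset (Sym2 Pt)}
    (h1 : IsPST S E₁) (h2 : IsPST S E₂)
    (e1 : E₁ = (Finset.range m).image (fun u => s(p u, q u)))
    (e2 : E₂ = (Finset.range m).image (fun u => s(p u, r u)))
    (i1 : ∀ u w, u < m → w < m → s(p u, q u) = s(p w, q w) → u = w)
    (i2 : ∀ u w, u < m → w < m → s(p u, r u) = s(p w, r w) → u = w)
    (i3 : ∀ u w, u < m → w < m → s(p u, q u) = s(p w, r w) → u = w)
    (hem : ∀ u < m, s(p u, q u) ≠ s(p u, r u) →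
      ∀ g ∈ E₁ ∪ E₂, Disjoint (segOf g) (triInt (p u) (q u) (r u))) :
    SimEmptyTriRot S E₁ E₂ := by
  have hpi : ∀ e, ∃ e', ∀ u < m, e = s(p u, q u) → e' = s(p u, r u) := by
    intro e
    by_cases h : ∃ u < m, e = s(p u, q u)
    · obtain ⟨u, hu, rfl⟩ := h
      refine ⟨s(p u, r u), fun w hw h => ?_⟩
      rw [i1 u w hu hw h]
    · exact ⟨e, fun u hu hh => (h ⟨u, hu, hh⟩).elim⟩
  choose π hπ using hpi
  have m1 : ∀ e, e ∈ E₁ \ E₂ ↔ ∃ u < m, e = s(p u, q u) ∧ s(p u, q u) ≠ s(p u, r u) := by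
    intro e
    rw [Finset.mem_sdiff, e1, e2]
    simp only [Finset.mem_image, Finset.mem_range]
    constructor
    · rintro ⟨⟨u, hu, rfl⟩, hn⟩
      exact ⟨u, hu, rfl, fun h => hn ⟨u, hu, h.symm⟩⟩
    · rintro ⟨u, hu, rfl, hn⟩
      refine ⟨⟨u, hu, rfl⟩, ?_⟩
      rintro ⟨w, hw, h⟩
      obtain rfl := i3 u w hu hw h.symm
      exact hn h.symm
  have m2 : ∀ e, e ∈ E₂ \ E₁ ↔ ∃ u < m, e = s(p u, r u) ∧ s(p u, q u) ≠ s(p u, r u) := by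
    intro e
    rw [Finset.mem_sdiff, e1, e2]
    simp only [Finset.mem_image, Finset.mem_range]
    constructor
    · rintro ⟨⟨u, hu, rfl⟩, hn⟩
      exact ⟨u, hu, rfl, fun h => hn ⟨u, hu, h⟩⟩
    · rintro ⟨u, hu, rfl, hn⟩
      refine ⟨⟨u, hu, rfl⟩, ?_⟩
      rintro ⟨w, hw, h⟩
      obtain rfl := i3 w u hw hu h
      exact hn h
  refine ⟨h1, h2, π, ⟨?_, ?_, ?_⟩, ?_⟩
  · intro e he
    obtain ⟨u, hu, he, hn⟩ := (m1 e).1 he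
    exact (m2 _).2 ⟨u, hu, hπ e u hu he, hn⟩
  · intro e he e' he' h
    obtain ⟨u, hu, he, hn⟩ := (m1 e).1 he
    obtain ⟨w, hw, he', hn⟩ := (m1 e').1 he'
    rw [hπ e u hu he, hπ e' w hw he'] at h
    rw [he, he', i2 u w hu hw h]
  · intro e he
    obtain ⟨u, hu, he, hn⟩ := (m2 e).1 he
    exact ⟨s(p u, q u), (m1 _).2 ⟨u, hu, rfl, hn⟩, by rw [he, hπ _ u hu rfl]⟩
  · intro e he
    obtain ⟨u, hu, he, hn⟩ := (m1 e).1 he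
    exact ⟨p u, q u, r u, he, hπ e u hu he, hem u hu hn⟩

theorem rot_symm {S : Finset Pt} {E₁ E₂ : Finset (Sym2 Pt)} (h : SimEmptyTriRot S E₁ E₂) :
    SimEmptyTriRot S E₂ E₁ := by
  obtain ⟨h1, h2, π, hb, ht⟩ := h
  refine ⟨h2, h1, Function.invFunOn π ↑(E₁ \ E₂), Set.BijOn.symm (Set.BijOn.invOn_invFunOn hb).symm hb, ?_⟩
  intro e he
  obtain ⟨e', he', rfl⟩ := hb.2.2 he
  obtain ⟨p, q, r, a1, a2, a3⟩ := ht e' he'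
  refine ⟨p, r, q, a2, ?_, ?_⟩
  · rw [(Set.BijOn.invOn_invFunOn hb).1 he', a1]
  · intro g hg
    rw [triInt_swap]
    exact a3 g (by rwa [Finset.union_comm])

theorem half {m : ℕ} {f : ℕ → Pt} (hf : CCW m f) {E : Finset (Sym2 Pt)}
    (hE : IsPST ((Finset.range (m + 1)).image f) E) :
    ∃ M, SimEmptyTriRot ((Finset.range (m + 1)).image f) E M ∧
      SimEmptyTriRot ((Finset.range (m + 1)).image f) M
        ((Finset.range m).image (fun u => s(f u, f (u + 1)))) := by
  have hcardS : ((Finset.range (m + 1)).image f).card = m + 1 := by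
    rw [Finset.card_image_of_injOn, Finset.card_range]
    intro i hi j hj h
    simp only [Finset.coe_range, Set.mem_Iio] at hi hj
    exact hf.1 _ _ (by omega) (by omega) h
  obtain ⟨a, b, hab, hinj⟩ := comb m (fun i j => i < j ∧ j ≤ m ∧ s(f i, f j) ∈ E)
    (fun a b h => ⟨h.1, h.2.1⟩)
    (by
      rintro a b c d ⟨h1, h2, h3⟩ ⟨h4, h5, h6⟩ ⟨h7, h8, h9⟩
      refine cross_of_interleave hf h7 h8 h9 h5 (hE.2.1 _ h3 _ h6 ?_)
      intro h
      have := edge_inj hf h1 h4 h2 h5 h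
      omega)
    (by
      intro P hP i j hi hj hPi
      have hr := hE.2.2.2 (f i) (Finset.mem_image_of_mem _ (Finset.mem_range.2 (by omega)))
        (f j) (Finset.mem_image_of_mem _ (Finset.mem_range.2 (by omega)))
      have : ∀ z, Relation.ReflTransGen (fun a b => s(a, b) ∈ E) (f i) z →
          ∃ k ≤ m, z = f k ∧ P k := by
        intro z hz
        induction hz with
        | refl => exact ⟨i, hi, rfl, hPi⟩
        | tail _ hbc ih =>
          obtain ⟨k, hk, rfl, hPk⟩ := ih
          rename_i w _
          obtain ⟨hd, hm⟩ := hE.1 _ hbc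
          have hw := hm w (Sym2.mem_mk_right _ _)
          obtain ⟨l, hl, rfl⟩ := Finset.mem_image.1 hw
          rw [Finset.mem_range] at hl
          refine ⟨l, by omega, rfl, ?_⟩
          rcases lt_trichotomy k l with h | rfl | h
          · exact (hP k l ⟨h, by omega, hbc⟩).1 hPk
          · exact hPk
          · exact (hP l k ⟨h, by omega, by rw [Sym2.eq_swap]; exact hbc⟩).2 hPk
      obtain ⟨k, hk, h1, h2⟩ := this _ hr
      rwa [hf.1 _ _ hj hk h1])
  have hnc : ∀ u w, u < m → w < m → ¬ (a u < a w ∧ a w < b u ∧ b u < b w) := by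
    intro u w hu hw h
    obtain ⟨⟨h1, h2, h3⟩, -⟩ := hab u hu
    obtain ⟨⟨h4, h5, h6⟩, -⟩ := hab w hw
    refine cross_of_interleave hf h.1 h.2.1 h.2.2 h5 (hE.2.1 _ h3 _ h6 ?_)
    intro h
    have := edge_inj hf h1 h4 h2 h5 h
    omega
  have hin : ∀ u w, u < m → w < m → a w ≤ u → u < b w → a w ≤ a u ∧ b u ≤ b w :=
    fun u w hu hw h1 h2 => (hab u hu).2.2.2 _ _ (hab w hw).1 h1 h2
  have hb : ∀ u < m, a u ≤ u ∧ u < b u ∧ b u ≤ m := fun u hu =>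
    ⟨(hab u hu).2.1, (hab u hu).2.2.1, (hab u hu).1.2.1⟩
  have hEeq : E = (Finset.range m).image (fun u => s(f (b u), f (a u))) := by
    symm
    apply Finset.eq_of_subset_of_card_le
    · intro e he
      obtain ⟨u, hu, rfl⟩ := Finset.mem_image.1 he
      rw [Sym2.eq_swap]
      exact (hab u (Finset.mem_range.1 hu)).1.2.2
    · rw [Finset.card_image_of_injOn, Finset.card_range]
      · have := hE.2.2.1
        omega
      · intro u hu w hw h
        simp only [Finset.coe_range, Set.mem_Iio] at hu hw
        simp only at h
        rw [Sym2.eq_swap, @Sym2.eq_swap _ (f (b w))] at h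
        have h1 := hb u hu
        have h2 := hb w hw
        have := edge_inj hf (by omega) (by omega) (by omega) (by omega) h
        exact hinj u w hu hw this.1 this.2
  have hMN : ∀ u w, u < m → w < m → NI u (b u) w (b w) := by
    intro u w hu hw
    have h1 := hb u hu
    have h2 := hb w hw
    have h3 := hin u w hu hw
    have h4 := hin w u hw hu
    unfold NI; omega
  have hM := pst_of_parent hf b (fun u hu => (hb u hu).2) hMN
  have hP := pst_of_parent hf (fun u => u + 1) (fun u hu => ⟨by omega, by omega⟩)
    (fun u w _ _ => by unfold NI; omega)
  refine ⟨(Finset.range m).image (fun u => s(f u, f (b u))), ?_, ?_⟩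
  · refine step_gen (m := m) (fun u => f (b u)) (fun u => f (a u)) (fun u => f u) hE hM hEeq
      (by congr 1; ext1 u; exact Sym2.eq_swap) ?_ ?_ ?_ ?_
    · intro u w hu hw h
      have h1 := hb u hu
      have h2 := hb w hw
      rw [Sym2.eq_swap, @Sym2.eq_swap _ (f (b w))] at h
      have := edge_inj hf (by omega) (by omega) (by omega) (by omega) h
      exact hinj u w hu hw this.1 this.2
    · intro u w hu hw h
      have h1 := hb u hu
      have h2 := hb w hw
      rw [Sym2.eq_swap, @Sym2.eq_swap _ (f (b w))] at h
      exact (edge_inj hf (by omega) (by omega) (by omega) (by omega) h).1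
    · intro u w hu hw h
      have h1 := hb u hu
      have h2 := hb w hw
      rw [Sym2.eq_swap, @Sym2.eq_swap _ (f (b w))] at h
      have h3 := (edge_inj hf (by omega) (by omega) (by omega) (by omega) h)
      have h4 := hin w u hw hu
      exact hinj u w hu hw (by omega) (by omega)
    · intro u hu hne g hg
      have h1 := hb u hu
      have hau : a u < u := by
        rcases h1.1.eq_or_lt with h | h
        · exact (hne (by simp only [h])).elim
        · exact h
      rw [triInt_cyc]
      rw [Finset.mem_union] at hg
      rcases hg with hg | hg
      · rw [hEeq] at hg
        obtain ⟨w, hw, rfl⟩ := Finset.mem_image.1 hg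
        rw [Finset.mem_range] at hw
        rw [Sym2.eq_swap]
        have h2 := hb w hw
        have h3 := hin u w hu hw
        have h5 := hnc u w hu hw
        have h6 := hnc w u hw hu
        apply tri_empty hf hau h1.2.1 h1.2.2 (by omega) h2.2.2 <;> unfold NI <;> omega
      · obtain ⟨w, hw, rfl⟩ := Finset.mem_image.1 hg
        rw [Finset.mem_range] at hw
        have h2 := hb w hw
        have h3 := hin u w hu hw
        have h4 := hin w u hw hu
        have h5 := hnc u w hu hw
        have h6 := hnc w u hw hu
        have h7 := hinj u w hu hw
        apply tri_empty hf hau h1.2.1 h1.2.2 (by omega) h2.2.2 <;> unfold NI <;> omega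
  · refine step_gen (m := m) (fun u => f u) (fun u => f (b u)) (fun u => f (u + 1)) hM hP rfl rfl
      ?_ ?_ ?_ ?_
    · intro u w hu hw h
      have h1 := hb u hu
      have h2 := hb w hw
      exact (edge_inj hf (by omega) (by omega) (by omega) (by omega) h).1
    · intro u w hu hw h
      exact (edge_inj hf (by omega) (by omega) (by omega) (by omega) h).1
    · intro u w hu hw h
      have h1 := hb u hu
      exact (edge_inj hf (by omega) (by omega) (by omega) (by omega) h).1
    · intro u hu hne g hg
      have h1 := hb u hu
      have hau : u + 1 < b u := by
        rcases (show u + 1 ≤ b u by omega).eq_or_lt with h | h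
        · exact (hne (by simp only [h])).elim
        · exact h
      rw [triInt_swap]
      rw [Finset.mem_union] at hg
      rcases hg with hg | hg
      · obtain ⟨w, hw, rfl⟩ := Finset.mem_image.1 hg
        rw [Finset.mem_range] at hw
        have h2 := hb w hw
        have h3 := hMN u w hu hw
        rcases eq_or_ne w u with rfl | hwu
        · apply tri_empty hf (by omega) hau h1.2.2 (by omega) h2.2.2 <;> unfold NI <;> omega
        · unfold NI at h3
          apply tri_empty hf (by omega) hau h1.2.2 (by omega) h2.2.2 <;> unfold NI <;> omega
      · obtain ⟨w, hw, rfl⟩ := Finset.mem_image.1 hg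
        rw [Finset.mem_range] at hw
        apply tri_empty hf (by omega) hau h1.2.2 (by omega) (by omega) <;> unfold NI <;> omega

theorem col_aux {q r : Pt} (hq : 0 < q.1 ∨ q.1 = 0 ∧ 0 < q.2) (hr : 0 < r.1 ∨ r.1 = 0 ∧ 0 < r.2)
    (h : q.1 * r.2 - q.2 * r.1 = 0) :
    ∃ t : ℝ, 0 ≤ t ∧ t ≤ 1 ∧ (q = t • r ∨ r = t • q) := by
  have key : ∀ q r : Pt, 0 < q.1 → 0 < r.1 → q.1 ≤ r.1 → q.1 * r.2 - q.2 * r.1 = 0 →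
      ∃ t : ℝ, 0 ≤ t ∧ t ≤ 1 ∧ q = t • r := by
    intro q r hq hr hle h
    refine ⟨q.1 / r.1, by positivity, (div_le_one hr).2 hle, ?_⟩
    ext
    · simp only [Prod.smul_fst, smul_eq_mul]; field_simp
    · simp only [Prod.smul_snd, smul_eq_mul]; field_simp; linarith
  have key2 : ∀ q r : Pt, 0 < q.2 → 0 < r.2 → q.2 ≤ r.2 → q.1 = 0 → r.1 = 0 →
      ∃ t : ℝ, 0 ≤ t ∧ t ≤ 1 ∧ q = t • r := by
    intro q r hq hr hle h1 h2
    refine ⟨q.2 / r.2, by positivity, (div_le_one hr).2 hle, ?_⟩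
    ext
    · simp only [Prod.smul_fst, smul_eq_mul, h1, h2, mul_zero]
    · simp only [Prod.smul_snd, smul_eq_mul]; field_simp
  rcases hq with hq | ⟨hq, hq'⟩ <;> rcases hr with hr | ⟨hr, hr'⟩
  · rcases le_total q.1 r.1 with hl | hl
    · obtain ⟨t, h1, h2, h3⟩ := key q r hq hr hl h
      exact ⟨t, h1, h2, Or.inl h3⟩
    · obtain ⟨t, h1, h2, h3⟩ := key r q hr hq hl (by linarith)
      exact ⟨t, h1, h2, Or.inr h3⟩
  · rw [hr] at h; nlinarith [mul_pos hq hr']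
  · rw [hq] at h; nlinarith [mul_pos hr hq']
  · rcases le_total q.2 r.2 with hl | hl
    · obtain ⟨t, h1, h2, h3⟩ := key2 q r hq' hr' hl hq hr
      exact ⟨t, h1, h2, Or.inl h3⟩
    · obtain ⟨t, h1, h2, h3⟩ := key2 r q hr' hq' hl hr hq
      exact ⟨t, h1, h2, Or.inr h3⟩

theorem trans_aux {q r s : Pt} (hq : 0 < q.1 ∨ q.1 = 0 ∧ 0 < q.2)
    (hr : 0 < r.1 ∨ r.1 = 0 ∧ 0 < r.2) (hs : 0 < s.1 ∨ s.1 = 0 ∧ 0 < s.2)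
    (h1 : 0 < q.1 * r.2 - q.2 * r.1) (h2 : 0 < r.1 * s.2 - r.2 * s.1) :
    0 < q.1 * s.2 - q.2 * s.1 := by
  have e : (q.1 * s.2 - q.2 * s.1) * r.1
    = (r.1 * s.2 - r.2 * s.1) * q.1 + (q.1 * r.2 - q.2 * r.1) * s.1 := by ring
  have hs0 : 0 ≤ s.1 := by rcases hs with h | h; exacts [h.le, h.1.ge]
  have hrp : 0 < r.1 := by
    rcases hr with h | ⟨h, h'⟩
    · exact h
    · rw [h] at h2; nlinarith
  have hqp : 0 < q.1 := by
    rcases hq with h | ⟨h, h'⟩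
    · exact h
    · rw [h] at h1; nlinarith
  have : 0 < (q.1 * s.2 - q.2 * s.1) * r.1 := by
    rw [e]; have := mul_pos h2 hqp; have := mul_nonneg h1.le hs0; linarith
  exact pos_of_mul_pos_left this hrp.le

theorem enum_aux {α : Type*} [Fintype α] (L : α → α → Prop) (hL : IsStrictTotalOrder α L) {k : ℕ}
    (hk : Fintype.card α = k) :
    ∃ g : Fin k → α, Function.Injective g ∧ ∀ (i j : Fin k), i.1 < j.1 → L (g i) (g j) := by
  let _ : LinearOrder α := linearOrderOfSTO L
  let iso := Fintype.orderIsoFinOfCardEq α hk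
  exact ⟨iso, iso.injective, fun i j h => iso.lt_iff_lt.2 h⟩

theorem exists_ccw (S : Finset Pt) (hS : ConvexPos S) (m : ℕ) (hm : S.card = m + 1) :
    ∃ f : ℕ → Pt, CCW m f ∧ S = (Finset.range (m + 1)).image f := by
  have hnotin : ∀ p q r t, p ∈ S → q ∈ S → r ∈ S → t ∈ S → t ≠ p → t ≠ q → t ≠ r →
      ∀ α β γ : ℝ, 0 ≤ α → 0 ≤ β → 0 ≤ γ → α + β + γ = 1 → t ≠ α • p + β • q + γ • r := by
    intro p q r t hp hq hr ht h1 h2 h3 α β γ ha hb hc hs he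
    refine hS t ht ?_
    have hcv := convex_convexHull ℝ ((S : Set Pt) \ {t})
    have mp : p ∈ convexHull ℝ ((S : Set Pt) \ {t}) := subset_convexHull _ _ ⟨hp, h1.symm⟩
    have mq : q ∈ convexHull ℝ ((S : Set Pt) \ {t}) := subset_convexHull _ _ ⟨hq, h2.symm⟩
    have mr : r ∈ convexHull ℝ ((S : Set Pt) \ {t}) := subset_convexHull _ _ ⟨hr, h3.symm⟩
    have := hcv.sum_mem (t := Finset.univ) (w := ![α, β, γ]) (z := ![p, q, r])
      (by intro i _; fin_cases i <;> simpa) (by simp [Fin.sum_univ_three, hs])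
      (by intro i _; fin_cases i <;> simpa)
    simp only [Fin.sum_univ_three, Matrix.cons_val_zero, Matrix.cons_val_one, Matrix.cons_val] at this
    rwa [← he] at this
  obtain ⟨p0, hp0, hmin⟩ := S.exists_min_image (fun p => toLex p)
    (Finset.card_pos.1 (by omega))
  have hlex : ∀ q ∈ S, q ≠ p0 → 0 < (q - p0).1 ∨ (q - p0).1 = 0 ∧ 0 < (q - p0).2 := by
    intro q hq hne
    have h := hmin q hq
    rw [Prod.Lex.toLex_le_toLex] at h
    simp only [Prod.fst_sub, Prod.snd_sub]
    rcases h with h | ⟨h, h'⟩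
    · left; linarith
    · right
      refine ⟨by linarith, ?_⟩
      rcases h'.lt_or_eq with h'' | h''
      · linarith
      · exact (hne (Prod.ext h.symm h''.symm)).elim
  have hori : ∀ q r : Pt, ori p0 q r = (q - p0).1 * (r - p0).2 - (q - p0).2 * (r - p0).1 := by
    intro q r; simp only [ori, Prod.fst_sub, Prod.snd_sub]
  have hne0 : ∀ q ∈ S, ∀ r ∈ S, q ≠ p0 → r ≠ p0 → q ≠ r → ori p0 q r ≠ 0 := by
    intro q hq r hr h1 h2 h3 h0
    rw [hori] at h0
    obtain ⟨t, t0, t1, ht⟩ := col_aux (hlex q hq h1) (hlex r hr h2) h0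
    rcases ht with ht | ht
    · refine hnotin p0 p0 r q hp0 hp0 hr hq h1 h1 h3 (1 - t) 0 t (by linarith) le_rfl t0
        (by ring) ?_
      rw [sub_eq_iff_eq_add] at ht
      rw [ht, smul_sub, sub_smul, one_smul, zero_smul]; abel
    · refine hnotin p0 p0 q r hp0 hp0 hq hr h2 h2 h3.symm (1 - t) 0 t (by linarith) le_rfl t0
        (by ring) ?_
      rw [sub_eq_iff_eq_add] at ht
      rw [ht, smul_sub, sub_smul, one_smul, zero_smul]; abel
  let L : {x // x ∈ S} → {x // x ∈ S} → Prop := fun q r =>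
    (q.1 = p0 ∧ r.1 ≠ p0) ∨ (q.1 ≠ p0 ∧ r.1 ≠ p0 ∧ 0 < ori p0 q.1 r.1)
  have hsto : IsStrictTotalOrder {x // x ∈ S} L :=
    { trichotomous := by
        rintro ⟨q, hq⟩ ⟨r, hr⟩ h1 h2
        simp only [L] at h1 h2
        apply Subtype.ext
        simp only
        by_contra hne
        have h3 := ori_swap p0 q r
        by_cases hq0 : q = p0
        · exact h1 (Or.inl ⟨hq0, fun h => hne (hq0.trans h.symm)⟩)
        by_cases hr0 : r = p0
        · exact h2 (Or.inl ⟨hr0, hq0⟩)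
        rcases lt_or_gt_of_ne (hne0 q hq r hr hq0 hr0 hne) with h4 | h4
        · exact h2 (Or.inr ⟨hr0, hq0, by linarith⟩)
        · exact h1 (Or.inr ⟨hq0, hr0, h4⟩)
      irrefl := by
        rintro ⟨q, hq⟩ h
        rcases h with h | h
        · exact h.2 h.1
        · have := h.2.2; rw [ori_r] at this; exact lt_irrefl _ this
      trans := by
        rintro ⟨q, hq⟩ ⟨r, hr⟩ ⟨t, ht⟩ h1 h2
        simp only [L] at h1 h2 ⊢
        rcases h1 with h1 | h1 <;> rcases h2 with h2 | h2
        · exact Or.inl ⟨h1.1, h2.2⟩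
        · exact Or.inl ⟨h1.1, h2.2.1⟩
        · exact (h1.2.1 h2.1).elim
        · refine Or.inr ⟨h1.1, h2.2.1, ?_⟩
          have a1 := h1.2.2
          have a2 := h2.2.2
          rw [hori] at a1 a2 ⊢
          exact trans_aux (hlex q hq h1.1) (hlex r hr h1.2.1) (hlex t ht h2.2.1) a1 a2 }
  obtain ⟨iso, hiso, hltL⟩ := enum_aux L hsto (k := m + 1) (by rw [Fintype.card_coe, hm])
  let f : ℕ → Pt := fun i => if h : i < m + 1 then (iso ⟨i, h⟩).1 else p0
  have hfi : ∀ i (h : i < m + 1), f i = (iso ⟨i, h⟩).1 := fun i h => dif_pos h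
  have hfm : ∀ i, i ≤ m → f i ∈ S := by
    intro i h
    rw [hfi i (by omega)]; exact (iso _).2
  have hinj : ∀ i j, i ≤ m → j ≤ m → f i = f j → i = j := by
    intro i j hi hj h
    rw [hfi i (by omega), hfi j (by omega)] at h
    have := hiso (Subtype.ext h)
    simpa using this
  have hL : ∀ i j, i < j → j ≤ m →
      (f i = p0 ∧ f j ≠ p0) ∨ (f i ≠ p0 ∧ f j ≠ p0 ∧ 0 < ori p0 (f i) (f j)) := by
    intro i j hij hj
    rw [hfi i (by omega), hfi j (by omega)]
    exact hltL _ _ hij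
  refine ⟨f, ⟨hinj, ?_⟩, ?_⟩
  · intro i j k hij hjk hk
    have a1 := hL i j hij (by omega)
    have a2 := hL j k hjk hk
    have a3 := hL i k (by omega) hk
    have b2 : 0 < ori p0 (f j) (f k) := by
      rcases a2 with h | h
      · rcases a1 with h' | h'
        · exact (h'.2 h.1).elim
        · exact (h'.2.1 h.1).elim
      · exact h.2.2
    by_cases hi0 : f i = p0
    · rw [hi0]; exact b2
    have b1 : 0 < ori p0 (f i) (f j) := by
      rcases a1 with h | h
      · exact (hi0 h.1).elim
      · exact h.2.2
    have b3 : 0 < ori p0 (f i) (f k) := by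
      rcases a3 with h | h
      · exact (hi0 h.1).elim
      · exact h.2.2
    have hj0 : f j ≠ p0 := by rcases a1 with h | h; exacts [h.2, h.2.1]
    by_contra hcon
    push Not at hcon
    have hnij : f j ≠ f i := fun h => by have := hinj _ _ (by omega) (by omega) h; omega
    have hnjk : f j ≠ f k := fun h => by have := hinj _ _ (by omega) (by omega) h; omega
    have hid : ori (f i) (f j) (f k)
        = ori p0 (f i) (f j) + ori p0 (f j) (f k) - ori p0 (f i) (f k) := by
      simp only [ori]; ring
    refine hnotin p0 (f i) (f k) (f j) hp0 (hfm i (by omega)) (hfm k hk) (hfm j (by omega))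
      hj0 hnij hnjk (-ori (f i) (f j) (f k) / ori p0 (f i) (f k))
      (ori p0 (f j) (f k) / ori p0 (f i) (f k)) (ori p0 (f i) (f j) / ori p0 (f i) (f k))
      (div_nonneg (by linarith) b3.le) (by positivity) (by positivity) ?_ ?_
    · rw [← add_div, ← add_div, div_eq_one_iff_eq b3.ne']; linarith
    · have key : ori p0 (f i) (f k) • f j = (-ori (f i) (f j) (f k)) • p0
          + ori p0 (f j) (f k) • f i + ori p0 (f i) (f j) • f k := by
        ext
        · simp only [ori, Prod.fst_add, Prod.smul_fst, smul_eq_mul]; ring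
        · simp only [ori, Prod.snd_add, Prod.smul_snd, smul_eq_mul]; ring
      have := congrArg (fun v => (ori p0 (f i) (f k))⁻¹ • v) key
      simp only [smul_add, smul_smul] at this
      rw [inv_mul_cancel₀ b3.ne', one_smul] at this
      simpa only [div_eq_inv_mul] using this
  · symm
    apply Finset.eq_of_subset_of_card_le
    · intro x hx
      obtain ⟨i, hi, rfl⟩ := Finset.mem_image.1 hx
      rw [Finset.mem_range] at hi
      exact hfm i (by omega)
    · rw [Finset.card_image_of_injOn, Finset.card_range, hm]
      intro i hi j hj h
      simp only [Finset.coe_range, Set.mem_Iio] at hi hj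
      exact hinj _ _ (by omega) (by omega) h

/-- on points in convex position, any two trees are connected by at most `4`
simultaneous empty-triangle rotations. -/
theorem stmt_6 :
    ∀ S : Finset Pt, ConvexPos S →
      ∀ E E' : Finset (Sym2 Pt), IsPST S E → IsPST S E' →
        ReachesIn (SimEmptyTriRot S) 4 E E' := by
  intro S hS E E' hE hE'
  obtain ⟨f, hf, hSf⟩ := exists_ccw S hS E.card hE.2.2.1.symm
  rw [hSf] at hE hE'
  obtain ⟨M, h1, h2⟩ := half hf hE
  obtain ⟨M', h3, h4⟩ := half hf hE'
  rw [hSf]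
  refine ⟨4, le_rfl, fun i => match i with
    | 0 => E
    | 1 => M
    | 2 => (Finset.range E.card).image (fun u => s(f u, f (u + 1)))
    | 3 => M'
    | _ => E', rfl, rfl, ?_⟩
  intro i hi
  interval_cases i
  · exact h1
  · exact h2
  · exact rot_symm h4
  · exact rot_symm h3
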